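/- arXiv:1609.00599 — 5 statements merged into one kernel-verified Lean document; each statement's English description precedes it below -/
import Mathlib

section
/- Let ρ > 0 and let α = (α₀, …, αₙ) : [0,T] → ℝ^{n+1} be continuous with S(t) := ∫₀^t e^{−ρ(t−s)} Σ_{j=0}^n α_j(s) ds. Suppose there is η = (η₀, …, ηₙ) ∈ ℝ^{n+1} such that γ_i α_i(t) + S(t) + ∫_t^T e^{ρ(t−s)} α_i(s) ds = η_i for all t ∈ [0,T] and all i. Then each α_i is continuously differentiable on [0,T] with dα_i/dt (t) = ρ α_i(t) − (1/γ_i) Σ_{j≠i} α_j(t) + (2ρ/γ_i) S(t) − ρ η_i / γ_i, and S is continuously differentiable with dS/dt (t) = Σ_{j=0}^n α_j(t) − ρ S(t). -/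
open MeasureTheory

/-!
Both exponential integrals have the form `I t = ∫ s in c..t, e^{k(t-s)} f s`, and factoring
`e^{kt}` out of the integral gives `I' = f + k I`. With `k = -ρ` this is the equation for `S`.
With `k = ρ`, the optimality condition expresses `αᵢ` linearly in `I`, `S` and `ηᵢ`, so `αᵢ` is
differentiable; eliminating `I` from its derivative by the optimality condition again closes the
system.
-/

section ExponentialIntegral

variable {E : Type*} [NormedAddCommGroup E] [NormedSpace ℝ E]

theorem integral_exp_mul_sub_smul (k : ℝ) (f : ℝ → E) (c t : ℝ) :
    ∫ s in c..t, Real.exp (k * (t - s)) • f s =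
      Real.exp (k * t) • ∫ s in c..t, Real.exp (-(k * s)) • f s := by
  simp only [← intervalIntegral.integral_smul, smul_smul, ← Real.exp_add, ← sub_eq_add_neg,
    ← mul_sub]

variable [CompleteSpace E] {J : Set ℝ} [hJ : J.OrdConnected] {f : ℝ → E} {c t : ℝ}

theorem hasDerivWithinAt_integral_of_ordConnected (hf : ContinuousOn f J) (hc : c ∈ J)
    (ht : t ∈ J) : HasDerivWithinAt (fun u => ∫ s in c..u, f s) (f t) J t := by
  have : intervalIntegral.FTCFilter t (nhdsWithin t J) (nhdsWithin t J) :=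
    { toTendstoIxxClass := Filter.tendstoIxxClass_of_subset fun _ _ => Set.Ioc_subset_Icc_self
      pure_le := pure_le_nhdsWithin ht
      le_nhds := nhdsWithin_le_nhds
      meas_gen := hJ.measurableSet.nhdsWithin_isMeasurablyGenerated t }
  exact intervalIntegral.integral_hasDerivWithinAt_right
    (hf.mono (hJ.uIcc_subset hc ht)).intervalIntegrable
    (hf.stronglyMeasurableAtFilter_nhdsWithin hJ.measurableSet t) (hf t ht)

theorem hasDerivWithinAt_integral_exp_mul_sub_smul (k : ℝ) (hf : ContinuousOn f J) (hc : c ∈ J)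
    (ht : t ∈ J) :
    HasDerivWithinAt (fun u => ∫ s in c..u, Real.exp (k * (u - s)) • f s)
      (f t + k • ∫ s in c..t, Real.exp (k * (t - s)) • f s) J t := by
  have hexp : HasDerivWithinAt (fun u => Real.exp (k * u)) (k * Real.exp (k * t)) J t := by
    simpa [mul_comm] using ((hasDerivAt_id t).const_mul k).exp.hasDerivWithinAt
  have h_integral : HasDerivWithinAt (fun u => ∫ s in c..u, Real.exp (-(k * s)) • f s)
      (Real.exp (-(k * t)) • f t) J t :=
    hasDerivWithinAt_integral_of_ordConnected (by fun_prop) hc ht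
  simp only [integral_exp_mul_sub_smul]
  refine (hexp.smul h_integral).congr_deriv ?_
  rw [smul_smul, smul_smul, ← Real.exp_add, add_neg_cancel, Real.exp_zero, one_smul]

end ExponentialIntegral

section Equilibrium

variable {E : Type*} [NormedAddCommGroup E] [NormedSpace ℝ E] [CompleteSpace E]
  {J : Set ℝ} [J.OrdConnected] {a b t ρ : ℝ}

theorem hasDerivWithinAt_of_eq_integral_exp_neg_mul {f S : ℝ → E} (hf : ContinuousOn f J)
    (ha : a ∈ J) (hS : ∀ u ∈ J, S u = ∫ s in a..u, Real.exp (-ρ * (u - s)) • f s) (ht : t ∈ J) :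
    HasDerivWithinAt S (f t - ρ • S t) J t := by
  refine ((hasDerivWithinAt_integral_exp_mul_sub_smul (-ρ) hf ha ht).congr_of_mem
    hS ht).congr_deriv ?_
  rw [← hS t ht, neg_smul, sub_eq_add_neg]

theorem hasDerivWithinAt_of_optimality {g : ℝ} (hg : g ≠ 0) {f S : ℝ → E} {S' η : E}
    (hf : ContinuousOn f J) (hb : b ∈ J) (hS : HasDerivWithinAt S S' J t)
    (hopt : ∀ u ∈ J, g • f u + S u + (∫ s in u..b, Real.exp (ρ * (u - s)) • f s) = η)
    (ht : t ∈ J) :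
    HasDerivWithinAt f (ρ • f t + g⁻¹ • (f t + ρ • (S t - η) - S')) J t := by
  have h_integral : ∀ u ∈ J, ∫ s in b..u, Real.exp (ρ * (u - s)) • f s = g • f u + S u - η := by
    intro u hu
    rw [intervalIntegral.integral_symm, ← hopt u hu]
    abel
  have hf_eq : ∀ u ∈ J,
      f u = g⁻¹ • ((∫ s in b..u, Real.exp (ρ * (u - s)) • f s) - S u + η) := by
    intro u hu
    rw [h_integral u hu, eq_inv_smul_iff₀ hg]
    abel
  have hderiv := (((hasDerivWithinAt_integral_exp_mul_sub_smul ρ hf hb ht).sub hS).add_const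
    η).const_smul g⁻¹
  refine (hderiv.congr_of_mem hf_eq ht).congr_deriv ?_
  rw [h_integral t ht]
  match_scalars <;> field_simp
  ring

theorem equilibrium_ode_exponential_kernel_general {ι : Type*} [Fintype ι] [DecidableEq ι]
    (ha : a ∈ J) (hb : b ∈ J) {γ : ι → ℝ} (hγ : ∀ i, γ i ≠ 0) {α : ι → ℝ → E}
    (hcont : ∀ i, ContinuousOn (α i) J) {S : ℝ → E}
    (hS : ∀ t ∈ J, S t = ∫ s in a..t, Real.exp (-ρ * (t - s)) • ∑ j, α j s) {η : ι → E}
    (hopt : ∀ t ∈ J, ∀ i,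
      γ i • α i t + S t + (∫ s in t..b, Real.exp (ρ * (t - s)) • α i s) = η i) :
    (∀ i, ∀ t ∈ J,
        HasDerivWithinAt (α i)
          (ρ • α i t - (1 / γ i) • (∑ j ∈ Finset.univ.erase i, α j t)
            + (2 * ρ / γ i) • S t - (ρ / γ i) • η i) J t) ∧
      (∀ i, ContinuousOn
          (fun t => ρ • α i t - (1 / γ i) • (∑ j ∈ Finset.univ.erase i, α j t)
            + (2 * ρ / γ i) • S t - (ρ / γ i) • η i) J) ∧
      (∀ t ∈ J, HasDerivWithinAt S ((∑ j, α j t) - ρ • S t) J t) ∧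
      ContinuousOn (fun t => (∑ j, α j t) - ρ • S t) J := by
  have hS_deriv : ∀ t ∈ J, HasDerivWithinAt S ((∑ j, α j t) - ρ • S t) J t := fun t ht =>
    hasDerivWithinAt_of_eq_integral_exp_neg_mul (by fun_prop) ha hS ht
  have hS_cont : ContinuousOn S J := fun t ht => (hS_deriv t ht).continuousWithinAt
  refine ⟨fun i t ht => ?_, fun i => by fun_prop, hS_deriv, by fun_prop⟩
  refine (hasDerivWithinAt_of_optimality (hγ i) (hcont i) hb (hS_deriv t ht)
    (fun u hu => hopt u hu i) ht).congr_deriv ?_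
  rw [Finset.sum_erase_eq_sub (Finset.mem_univ i)]
  module

end Equilibrium

/-- Suppose `α = (α₀, …, αₙ)` is continuous on `[0,T]`,
`S(t) = ∫₀ᵗ e^{−ρ(t−s)} Σⱼ αⱼ(s) ds`, and the equilibrium optimality
conditions `γ_i α_i(t) + S(t) + ∫ₜᵀ e^{ρ(t−s)} α_i(s) ds = η_i` hold on
`[0,T]`. Then each `α_i` is continuously differentiable on `[0,T]` with
`α_i' = ρ α_i − (1/γ_i) Σ_{j≠i} α_j + (2ρ/γ_i) S − ρ η_i/γ_i`,
and `S` is continuously differentiable with `S' = Σⱼ αⱼ − ρ S`. -/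
theorem equilibrium_ode_exponential_kernel
    (T : ℝ) (hT : 0 < T) (n : ℕ)
    (γ : Fin (n + 1) → ℝ) (hγ : ∀ i, 0 < γ i)
    (ρ : ℝ) (hρ : 0 < ρ)
    (α : Fin (n + 1) → ℝ → ℝ)
    (hcont : ∀ i, ContinuousOn (α i) (Set.Icc 0 T))
    (S : ℝ → ℝ)
    (hS : ∀ t ∈ Set.Icc (0 : ℝ) T,
      S t = ∫ s in (0:ℝ)..t, Real.exp (-ρ * (t - s)) * ∑ j, α j s)
    (η : Fin (n + 1) → ℝ)
    (hopt : ∀ t ∈ Set.Icc (0 : ℝ) T, ∀ i,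
      γ i * α i t + S t + (∫ s in t..T, Real.exp (ρ * (t - s)) * α i s) = η i) :
    (∀ i, ∀ t ∈ Set.Icc (0 : ℝ) T,
        HasDerivWithinAt (α i)
          (ρ * α i t - (1 / γ i) * (∑ j ∈ Finset.univ.erase i, α j t)
            + (2 * ρ / γ i) * S t - ρ * η i / γ i)
          (Set.Icc 0 T) t) ∧
      (∀ i, ContinuousOn
          (fun t => ρ * α i t - (1 / γ i) * (∑ j ∈ Finset.univ.erase i, α j t)
            + (2 * ρ / γ i) * S t - ρ * η i / γ i)
          (Set.Icc 0 T)) ∧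
      (∀ t ∈ Set.Icc (0 : ℝ) T,
        HasDerivWithinAt S ((∑ j, α j t) - ρ * S t) (Set.Icc 0 T) t) ∧
      ContinuousOn (fun t => (∑ j, α j t) - ρ * S t) (Set.Icc 0 T) := by
  
  simpa only [smul_eq_mul, div_mul_eq_mul_div] using
    equilibrium_ode_exponential_kernel_general (Set.left_mem_Icc.2 hT.le)
      (Set.right_mem_Icc.2 hT.le) (fun i => (hγ i).ne') hcont hS hopt
end

section
/- Let ρ > 0 and γ₀, …, γₙ > 0, and let M be the (n+2)×(n+2) real matrix with M_{ii} = ρ for 0 ≤ i ≤ n, M_{ij} = −1/γ_i for 0 ≤ i, j ≤ n with i ≠ j, M_{i,n+1} = 2ρ/γ_i for 0 ≤ i ≤ n, M_{n+1,j} = 1 for 0 ≤ j ≤ n, and M_{n+1,n+1} = −ρ. Then det M = −ρ (1 + Σ_{i=0}^n 1/(ργ_i + 1)) ∏_{i=0}^n (ρ + 1/γ_i); in particular det M ≠ 0, so M is invertible. -/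
open Matrix

/-- The `(n+2)×(n+2)` matrix `M` with `M_{ii} = ρ` for `i ≤ n`,
`M_{ij} = −1/γ_i` for `i ≠ j ≤ n`, `M_{i,n+1} = 2ρ/γ_i` for `i ≤ n`,
`M_{n+1,j} = 1` for `j ≤ n`, and `M_{n+1,n+1} = −ρ`. -/
noncomputable def Mmat (n : ℕ) (ρ : ℝ) (γ : Fin (n + 1) → ℝ) :
    Matrix (Fin (n + 2)) (Fin (n + 2)) ℝ := fun i j =>
  if hi : (i : ℕ) < n + 1 then
    if (j : ℕ) < n + 1 then
      if i = j then ρ else -1 / γ ⟨i, hi⟩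
    else 2 * ρ / γ ⟨i, hi⟩
  else
    if (j : ℕ) < n + 1 then 1 else -ρ

/-- The `(n+2)×(n+2)` matrix `N₁` with `(N₁)_{ii} = ργ_i` and `(N₁)_{i,n+1} = ρ`
for `i ≤ n`, `(N₁)_{n+1,j} = γ_j` for `j ≤ n`, `(N₁)_{n+1,n+1} = n+1`, and all
other entries `0`. -/
noncomputable def N1mat (n : ℕ) (ρ : ℝ) (γ : Fin (n + 1) → ℝ) :
    Matrix (Fin (n + 2)) (Fin (n + 2)) ℝ := fun i j =>
  if hi : (i : ℕ) < n + 1 then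
    if (j : ℕ) < n + 1 then
      if i = j then ρ * γ ⟨i, hi⟩ else 0
    else ρ
  else
    if hj : (j : ℕ) < n + 1 then γ ⟨j, hj⟩ else (n + 1 : ℝ)

/-- The `(n+1)×(n+2)` matrix `U` with `U_{ii} = γ_i`, `U_{i,n+1} = 1`
and all other entries `0`. -/
noncomputable def Umat (n : ℕ) (γ : Fin (n + 1) → ℝ) :
    Matrix (Fin (n + 1)) (Fin (n + 2)) ℝ := fun i j =>
  if (j : ℕ) < n + 1 then (if (i : ℕ) = (j : ℕ) then γ i else 0) else 1

/-- The `(n+1)×(n+2)` matrix `V` with `V_{ii} = ρ/γ_i` and all other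
entries `0`. -/
noncomputable def Vmat (n : ℕ) (ρ : ℝ) (γ : Fin (n + 1) → ℝ) :
    Matrix (Fin (n + 1)) (Fin (n + 2)) ℝ := fun i j =>
  if (i : ℕ) = (j : ℕ) then ρ / γ i else 0

/-- The `(n+1)×(n+2)` matrix `W` with `W_{ii} = 1` and all other entries `0`. -/
def Wmat (n : ℕ) : Matrix (Fin (n + 1)) (Fin (n + 2)) ℝ := fun i j =>
  if (i : ℕ) = (j : ℕ) then 1 else 0

/-- The vector `v = (0, …, 0, 1) ∈ ℝ^{n+2}`. -/
def vvec (n : ℕ) : Fin (n + 2) → ℝ := fun i =>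
  if (i : ℕ) < n + 1 then 0 else 1

/-!
Adding `2 / γ_i` times the last row to row `i` clears the last column above `-ρ`, so `det M` is
`-ρ` times the determinant of the remaining block `D + (1 / γ_i) 1ᵀ`, where `D` is the diagonal
matrix with entries `ρ + 1 / γ_i`. The column `1 / γ_i` is `D` applied to `1 / (ρ γ_i + 1)`, so
this block is `D (I + (1 / (ρ γ_i + 1)) 1ᵀ)`, and a rank-one perturbation `I + u vᵀ` of the
identity has determinant `1 + vᵀ u`.
-/

section Determinants

variable {ι κ R : Type*} [Fintype ι] [DecidableEq ι] [Fintype κ] [DecidableEq κ] [CommRing R]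

theorem det_fromBlocks_mul₁₂ (A : Matrix ι ι R) (X : Matrix ι κ R) (C : Matrix κ ι R)
    (D : Matrix κ κ R) : (fromBlocks A (X * D) C D).det = (A - X * C).det * D.det := by
  have hfactor : fromBlocks A (X * D) C D =
      fromBlocks 1 X 0 1 * fromBlocks (A - X * C) 0 C D := by
    simp [fromBlocks_multiply]
  rw [hfactor, det_mul, det_fromBlocks_zero₂₁, det_fromBlocks_zero₁₂, det_one, det_one, one_mul,
    one_mul]

theorem det_add_vecMulVec_mulVec (A : Matrix ι ι R) (u v : ι → R) :
    (A + vecMulVec (A *ᵥ u) v).det = A.det * (1 + v ⬝ᵥ u) := by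
  rw [← mul_vecMulVec, vecMulVec_eq Unit, ← mul_one_add, det_mul,
    det_one_add_replicateCol_mul_replicateRow]

end Determinants

section BlockMmat

variable {ι K : Type*} [DecidableEq ι] [Field K]

/-- The matrix `M` over a field `K`, with an arbitrary index type `ι` in place of `{0, …, n}`; the
summand `Fin 1` indexes the last row and column, so that the border can be eliminated blockwise. -/
def blockMmat (ρ : K) (γ : ι → K) : Matrix (ι ⊕ Fin 1) (ι ⊕ Fin 1) K :=
  fromBlocks (of fun i j ↦ if i = j then ρ else -1 / γ i) (of fun i _ ↦ 2 * ρ / γ i)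
    (of fun _ _ ↦ 1) (of fun _ _ ↦ -ρ)

theorem blockMmat_eq_fromBlocks (ρ : K) (γ : ι → K) :
    blockMmat ρ γ =
      fromBlocks (diagonal (fun i ↦ ρ + 1 / γ i) - vecMulVec (fun i ↦ 1 / γ i) 1)
        (replicateCol (Fin 1) (fun i : ι ↦ -2 / γ i) * diagonal fun _ : Fin 1 ↦ -ρ)
        (replicateRow (Fin 1) 1) (diagonal fun _ ↦ -ρ) := by
  rw [blockMmat, fromBlocks_inj]
  refine ⟨?_, ?_, rfl, ?_⟩ <;> ext i j
  · obtain rfl | hij := eq_or_ne i j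
    · simp
    · simp [hij, neg_div]
  · simp only [of_apply, mul_diagonal, replicateCol_apply]
    ring
  · rw [Subsingleton.elim i j, of_apply, diagonal_apply_eq]

variable [Fintype ι]

theorem det_blockMmat_eq_det_diagonal_add_vecMulVec_mul (ρ : K) (γ : ι → K) :
    (blockMmat ρ γ).det =
      (diagonal (fun i ↦ ρ + 1 / γ i) + vecMulVec (fun i ↦ 1 / γ i) 1).det * -ρ := by
  have hclear : diagonal (fun i ↦ ρ + 1 / γ i) - vecMulVec (fun i ↦ 1 / γ i) 1 -
      replicateCol (Fin 1) (fun i : ι ↦ -2 / γ i) * replicateRow (Fin 1) (1 : ι → K) =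
      diagonal (fun i ↦ ρ + 1 / γ i) + vecMulVec (fun i ↦ 1 / γ i) 1 := by
    ext i j
    simp only [Matrix.sub_apply, Matrix.add_apply, vecMulVec_apply, mul_apply,
      Fin.sum_univ_one, replicateCol_apply, replicateRow_apply]
    ring
  rw [blockMmat_eq_fromBlocks, det_fromBlocks_mul₁₂, hclear, det_diagonal, Fin.prod_univ_one]

theorem Mmat_det_general (ρ : K) {γ : ι → K} (hγ : ∀ i, γ i ≠ 0)
    (hργ : ∀ i, ρ * γ i + 1 ≠ 0) :
    (blockMmat ρ γ).det = -ρ * (1 + ∑ i, 1 / (ρ * γ i + 1)) * ∏ i, (ρ + 1 / γ i) ∧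
      (IsUnit (blockMmat ρ γ) ↔ ρ ≠ 0 ∧ 1 + ∑ i, 1 / (ρ * γ i + 1) ≠ 0) := by
  have hpivot i : ρ + 1 / γ i = (ρ * γ i + 1) / γ i := by
    rw [add_div, mul_div_cancel_right₀ _ (hγ i)]
  have hcol : (fun i ↦ 1 / γ i) =
      diagonal (fun i ↦ ρ + 1 / γ i) *ᵥ fun i ↦ 1 / (ρ * γ i + 1) := by
    ext i
    rw [mulVec_diagonal, hpivot, div_mul_div_cancel₀' (hργ i)]
  have hdet : (blockMmat ρ γ).det =
      -ρ * (1 + ∑ i, 1 / (ρ * γ i + 1)) * ∏ i, (ρ + 1 / γ i) := by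
    rw [det_blockMmat_eq_det_diagonal_add_vecMulVec_mul, hcol, det_add_vecMulVec_mulVec,
      det_diagonal, one_dotProduct]
    ring
  have hprod : ∏ i, (ρ + 1 / γ i) ≠ 0 := Finset.prod_ne_zero_iff.mpr fun i _ ↦
    hpivot i ▸ div_ne_zero (hργ i) (hγ i)
  refine ⟨hdet, ?_⟩
  rw [isUnit_iff_isUnit_det, isUnit_iff_ne_zero, hdet, mul_ne_zero_iff_right hprod, mul_ne_zero_iff,
    neg_ne_zero]

end BlockMmat

theorem Mmat_eq_reindex_blockMmat (n : ℕ) (ρ : ℝ) (γ : Fin (n + 1) → ℝ) :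
    Mmat n ρ γ = reindex finSumFinEquiv finSumFinEquiv (blockMmat ρ γ) := by
  rw [← Equiv.symm_apply_eq, reindex_symm]
  ext (i | i) (j | j) <;> simp [Mmat, blockMmat, Fin.ext_iff, Fin.is_le]

/-- `det M = −ρ (1 + Σᵢ 1/(ργ_i + 1)) ∏ᵢ (ρ + 1/γ_i)`;
in particular `det M ≠ 0`, so `M` is invertible. -/
theorem Mmat_det (n : ℕ) (ρ : ℝ) (hρ : 0 < ρ)
    (γ : Fin (n + 1) → ℝ) (hγ : ∀ i, 0 < γ i) :
    (Mmat n ρ γ).det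
        = -ρ * (1 + ∑ i, 1 / (ρ * γ i + 1)) * ∏ i, (ρ + 1 / γ i) ∧
      (Mmat n ρ γ).det ≠ 0 ∧ IsUnit (Mmat n ρ γ) := by
  have hργ i : 0 < ρ * γ i + 1 := add_pos (mul_pos hρ (hγ i)) one_pos
  have hsum : 0 < 1 + ∑ i, 1 / (ρ * γ i + 1) :=
    add_pos_of_pos_of_nonneg one_pos (Finset.sum_nonneg fun i _ ↦ (one_div_pos.mpr (hργ i)).le)
  obtain ⟨hdet, hunit⟩ := Mmat_det_general ρ (fun i ↦ (hγ i).ne') fun i ↦ (hργ i).ne'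
  have hM : IsUnit (blockMmat ρ γ) := hunit.mpr ⟨hρ.ne', hsum.ne'⟩
  rw [Mmat_eq_reindex_blockMmat, det_reindex_self, reindex_apply, isUnit_submatrix_equiv]
  exact ⟨hdet, ((isUnit_iff_isUnit_det _).mp hM).ne_zero, hM⟩
end

section
/- Let ρ > 0 and γ₀, …, γₙ > 0, and define the (n+2)×(n+2) matrices M and N₁, the (n+1)×(n+2) matrices U and V, and the vector v = (0, …, 0, 1) ∈ ℝ^{n+2} as in the context. Then M − VᵀU is invertible with inverse (M − VᵀU)^{−1} = (N₁ − v vᵀ)/ρ; equivalently, (M − VᵀU)(N₁ − v vᵀ) = ρ I_{n+2} and (N₁ − v vᵀ)(M − VᵀU) = ρ I_{n+2}. -/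
open Matrix

/-!
Write `D = diag γ`, `𝟏` for the all-ones column and `J = 𝟏𝟏ᵀ`. Splitting off the last coordinate,

* `M = [[ρI + D⁻¹(I - J), 2ρD⁻¹𝟏], [𝟏ᵀ, -ρ]]` and `VᵀU = [[ρI, ρD⁻¹𝟏], [0, 0]]`,
  so `M - VᵀU = [[D⁻¹(I - J), ρD⁻¹𝟏], [𝟏ᵀ, -ρ]]`;
* `N₁ - vvᵀ = [[ρD, ρ𝟏], [𝟏ᵀD, 𝟏ᵀ𝟏 - 1]]`.

In the product of the two, all the terms containing `𝟏` cancel, whatever column and row stand in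
for `𝟏` and `𝟏ᵀ`, and `ρI` remains. The matrices being square, the product in the other order is
`ρI` as well.
-/

section BlockIdentity

variable {k l m R : Type*} [Fintype k] [DecidableEq k] [DecidableEq l] [Fintype m] [DecidableEq m]
  [CommRing R]

theorem fromBlocks_mul_fromBlocks_eq_smul_one {P : Matrix l m R} {Q : Matrix m l R}
    (hPQ : P * Q = 1) (ρ : R) (C : Matrix m k R) (L : Matrix k m R) :
    fromBlocks (P * (1 - C * L)) (ρ • (P * C)) L (-ρ • 1) *
        fromBlocks (ρ • Q) (ρ • C) (L * Q) (L * C - 1) =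
      ρ • 1 := by
  have upper_left : P * (1 - C * L) * (ρ • Q) + ρ • (P * C) * (L * Q) = ρ • 1 := by
    rw [← hPQ]
    simp only [Matrix.mul_sub, Matrix.sub_mul, Matrix.mul_smul, Matrix.smul_mul, Matrix.mul_one,
      Matrix.mul_assoc, smul_sub, sub_add_cancel]
  have upper_right : P * (1 - C * L) * (ρ • C) + ρ • (P * C) * (L * C - 1) = 0 := by
    simp only [Matrix.mul_sub, Matrix.sub_mul, Matrix.mul_smul, Matrix.smul_mul, Matrix.mul_one,
      Matrix.mul_assoc, smul_sub]
    abel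
  have lower_left : L * (ρ • Q) + -ρ • (1 : Matrix k k R) * (L * Q) = 0 := by
    simp
  have lower_right : L * (ρ • C) + -ρ • (1 : Matrix k k R) * (L * C - 1) = ρ • 1 := by
    simp [smul_sub]
  rw [fromBlocks_multiply, upper_left, upper_right, lower_left, lower_right, ← fromBlocks_one,
    fromBlocks_smul, smul_zero, smul_zero]

end BlockIdentity

theorem mul_eq_smul_one_comm {K A : Type*} [Field K] [Ring A] [Algebra K A]
    [IsDedekindFiniteMonoid A] {a b : A} {c : K} (hc : c ≠ 0) :
    a * b = c • 1 ↔ b * a = c • 1 := by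
  rw [← inv_smul_eq_iff₀ hc, ← inv_smul_eq_iff₀ hc, ← mul_smul_comm, ← smul_mul_assoc,
    mul_eq_one_comm]

theorem diagonal_inv_mul_diagonal {m K : Type*} [Fintype m] [DecidableEq m] [Field K]
    {d : m → K} (hd : ∀ i, d i ≠ 0) : diagonal d⁻¹ * diagonal d = 1 := by
  simp [hd]

/-- The splitting of the indices `0, …, n + 1` into `0, …, n` and the last one, along which the
matrices are cut into blocks. -/
def splitLast (n : ℕ) : Fin (n + 1) ⊕ Fin 1 ≃ Fin (n + 2) := finSumFinEquiv

theorem val_splitLast_inl {n : ℕ} (i : Fin (n + 1)) : (splitLast n (.inl i) : ℕ) = i := rfl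

theorem val_splitLast_inr {n : ℕ} (i : Fin 1) : (splitLast n (.inr i) : ℕ) = n + 1 := by
  simp [splitLast]

section Blocks

variable (n : ℕ) (ρ : ℝ) (γ : Fin (n + 1) → ℝ)

/-- The all-ones column `𝟏`, as a matrix with one column. -/
abbrev onesCol : Matrix (Fin (n + 1)) (Fin 1) ℝ := replicateCol (Fin 1) 1

/-- The all-ones row `𝟏ᵀ`, as a matrix with one row. -/
abbrev onesRow : Matrix (Fin 1) (Fin (n + 1)) ℝ := replicateRow (Fin 1) 1

theorem onesCol_mul_onesRow_apply (i j : Fin (n + 1)) : (onesCol n * onesRow n) i j = 1 := by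
  simp [mul_apply]

theorem Mmat_submatrix_splitLast :
    (Mmat n ρ γ).submatrix (splitLast n) (splitLast n) =
      fromBlocks (ρ • 1 + diagonal γ⁻¹ * (1 - onesCol n * onesRow n))
        ((2 * ρ) • (diagonal γ⁻¹ * onesCol n)) (onesRow n) (-ρ • 1) := by
  ext (i | i) (j | j)
  · rcases eq_or_ne i j with rfl | hij
    · simp [Mmat, val_splitLast_inl, Fin.is_le, onesCol_mul_onesRow_apply]
    · simp [Mmat, val_splitLast_inl, Fin.is_le, onesCol_mul_onesRow_apply, hij, neg_div]
  · simp [Mmat, val_splitLast_inl, val_splitLast_inr, Fin.is_le, div_eq_mul_inv]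
  · simp [Mmat, val_splitLast_inl, val_splitLast_inr, Fin.is_le]
  · simp [Mmat, val_splitLast_inr, Subsingleton.elim i j]

theorem Umat_submatrix_splitLast :
    (Umat n γ).submatrix id (splitLast n) = fromCols (diagonal γ) (onesCol n) := by
  ext i (j | j)
  · simp [Umat, val_splitLast_inl, Fin.is_le, diagonal_apply, Fin.val_inj]
  · simp [Umat, val_splitLast_inr]

theorem Vmat_submatrix_splitLast :
    (Vmat n ρ γ).submatrix id (splitLast n) = fromCols (ρ • diagonal γ⁻¹) 0 := by
  ext i (j | j)
  · simp [Vmat, val_splitLast_inl, diagonal_apply, Fin.val_inj, div_eq_mul_inv]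
  · simp [Vmat, val_splitLast_inr, i.isLt.ne]

theorem N1mat_submatrix_splitLast :
    (N1mat n ρ γ).submatrix (splitLast n) (splitLast n) =
      fromBlocks (ρ • diagonal γ) (ρ • onesCol n) (onesRow n * diagonal γ)
        (onesRow n * onesCol n) := by
  ext (i | i) (j | j) <;>
    simp [N1mat, val_splitLast_inl, val_splitLast_inr, Fin.is_le, diagonal_apply]

theorem vecMulVec_vvec_submatrix_splitLast :
    (vecMulVec (vvec n) (vvec n)).submatrix (splitLast n) (splitLast n) = fromBlocks 0 0 0 1 := by
  ext (i | i) (j | j)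
  case inr.inr => simp [vvec, val_splitLast_inr, vecMulVec_apply, Subsingleton.elim i j]
  all_goals simp [vvec, val_splitLast_inl, Fin.is_le, vecMulVec_apply]

theorem N1mat_sub_submatrix_splitLast :
    (N1mat n ρ γ - vecMulVec (vvec n) (vvec n)).submatrix (splitLast n) (splitLast n) =
      fromBlocks (ρ • diagonal γ) (ρ • onesCol n) (onesRow n * diagonal γ)
        (onesRow n * onesCol n - 1) := by
  rw [submatrix_sub, Pi.sub_apply, Pi.sub_apply, N1mat_submatrix_splitLast,
    vecMulVec_vvec_submatrix_splitLast, sub_eq_iff_eq_add, fromBlocks_add]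
  simp only [add_zero, sub_add_cancel]

variable {γ}

theorem transpose_Vmat_mul_Umat_submatrix_splitLast (hγ : ∀ i, γ i ≠ 0) :
    ((Vmat n ρ γ)ᵀ * Umat n γ).submatrix (splitLast n) (splitLast n) =
      fromBlocks (ρ • 1) (ρ • (diagonal γ⁻¹ * onesCol n)) 0 0 := by
  rw [submatrix_mul _ _ _ id _ Function.bijective_id, ← transpose_submatrix,
    Vmat_submatrix_splitLast, Umat_submatrix_splitLast, transpose_fromCols, fromRows_mul_fromCols,
    transpose_smul, diagonal_transpose, Matrix.smul_mul, Matrix.smul_mul,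
    diagonal_inv_mul_diagonal hγ, transpose_zero, Matrix.zero_mul, Matrix.zero_mul]

theorem Mmat_sub_submatrix_splitLast (hγ : ∀ i, γ i ≠ 0) :
    (Mmat n ρ γ - (Vmat n ρ γ)ᵀ * Umat n γ).submatrix (splitLast n) (splitLast n) =
      fromBlocks (diagonal γ⁻¹ * (1 - onesCol n * onesRow n)) (ρ • (diagonal γ⁻¹ * onesCol n))
        (onesRow n) (-ρ • 1) := by
  rw [submatrix_sub, Pi.sub_apply, Pi.sub_apply, Mmat_submatrix_splitLast,
    transpose_Vmat_mul_Umat_submatrix_splitLast n ρ hγ, sub_eq_iff_eq_add', fromBlocks_add,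
    ← add_smul, ← two_mul, zero_add, zero_add]

theorem Mmat_sub_mul_N1mat_sub (hγ : ∀ i, γ i ≠ 0) :
    (Mmat n ρ γ - (Vmat n ρ γ)ᵀ * Umat n γ) * (N1mat n ρ γ - vecMulVec (vvec n) (vvec n)) =
      ρ • 1 := by
  apply (reindex (splitLast n).symm (splitLast n).symm).injective
  simp only [reindex_apply, Equiv.symm_symm]
  rw [← submatrix_mul_equiv _ _ _ (splitLast n), Mmat_sub_submatrix_splitLast n ρ hγ,
    N1mat_sub_submatrix_splitLast,
    fromBlocks_mul_fromBlocks_eq_smul_one (diagonal_inv_mul_diagonal hγ), submatrix_smul,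
    Pi.smul_apply, Pi.smul_apply, submatrix_one_equiv]

end Blocks

theorem M_sub_VtU_inverse_general (n : ℕ) (ρ : ℝ) (hρ : ρ ≠ 0)
    (γ : Fin (n + 1) → ℝ) (hγ : ∀ i, γ i ≠ 0) :
    (Mmat n ρ γ - (Vmat n ρ γ)ᵀ * Umat n γ)
          * ((1 / ρ) • (N1mat n ρ γ - vecMulVec (vvec n) (vvec n))) = 1 ∧
      ((1 / ρ) • (N1mat n ρ γ - vecMulVec (vvec n) (vvec n)))
          * (Mmat n ρ γ - (Vmat n ρ γ)ᵀ * Umat n γ) = 1 ∧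
      (Mmat n ρ γ - (Vmat n ρ γ)ᵀ * Umat n γ)
          * (N1mat n ρ γ - vecMulVec (vvec n) (vvec n)) =
        ρ • (1 : Matrix (Fin (n + 2)) (Fin (n + 2)) ℝ) ∧
      (N1mat n ρ γ - vecMulVec (vvec n) (vvec n))
          * (Mmat n ρ γ - (Vmat n ρ γ)ᵀ * Umat n γ) =
        ρ • (1 : Matrix (Fin (n + 2)) (Fin (n + 2)) ℝ) := by
  have right_mul := Mmat_sub_mul_N1mat_sub n ρ hγ
  have left_mul := (mul_eq_smul_one_comm hρ).mp right_mul
  refine ⟨?_, ?_, right_mul, left_mul⟩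
  · rw [Matrix.mul_smul, right_mul, smul_smul, one_div_mul_cancel hρ, one_smul]
  · rw [Matrix.smul_mul, left_mul, smul_smul, one_div_mul_cancel hρ, one_smul]

/-- `M − VᵀU` is invertible with inverse `(N₁ − v vᵀ)/ρ`:
`(M − VᵀU) · (N₁ − v vᵀ)/ρ = I` and `(N₁ − v vᵀ)/ρ · (M − VᵀU) = I`;
equivalently `(M − VᵀU)(N₁ − v vᵀ) = ρ I` and `(N₁ − v vᵀ)(M − VᵀU) = ρ I`. -/
theorem M_sub_VtU_inverse (n : ℕ) (ρ : ℝ) (hρ : 0 < ρ)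
    (γ : Fin (n + 1) → ℝ) (hγ : ∀ i, 0 < γ i) :
    (Mmat n ρ γ - (Vmat n ρ γ)ᵀ * Umat n γ)
          * ((1 / ρ) • (N1mat n ρ γ - Matrix.vecMulVec (vvec n) (vvec n))) = 1 ∧
      ((1 / ρ) • (N1mat n ρ γ - Matrix.vecMulVec (vvec n) (vvec n)))
          * (Mmat n ρ γ - (Vmat n ρ γ)ᵀ * Umat n γ) = 1 ∧
      (Mmat n ρ γ - (Vmat n ρ γ)ᵀ * Umat n γ)
          * (N1mat n ρ γ - Matrix.vecMulVec (vvec n) (vvec n)) = ρ • (1 : Matrix (Fin (n + 2)) (Fin (n + 2)) ℝ) ∧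
      (N1mat n ρ γ - Matrix.vecMulVec (vvec n) (vvec n))
          * (Mmat n ρ γ - (Vmat n ρ γ)ᵀ * Umat n γ) = ρ • (1 : Matrix (Fin (n + 2)) (Fin (n + 2)) ℝ) := by
  exact M_sub_VtU_inverse_general n ρ hρ.ne' γ fun i => (hγ i).ne'
end

section
/- Let ρ > 0 and γ₀, …, γₙ > 0, and define the matrices M, N₁ ((n+2)×(n+2)) and U, V ((n+1)×(n+2)) as in the context. Then Vᵀ U (I_{n+2} + N₁) = M N₁. -/
open Matrix

/-! Writing `e` for the all-ones vector, `N₁ = R U` where `R` stacks `ρ I` on top of `eᵀ`. Hence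
`Vᵀ U (I + R U) = Vᵀ (I + U R) U`, and since `M N₁ = (M R) U` it is enough that
`Vᵀ (I + U R) = M R`: both sides have top block `ρ² I + ρ Γ⁻¹ (I + e eᵀ)`, with `Γ = diag(γ)`, and
zero last row. -/

section Blocks

variable {ι K : Type*} [DecidableEq ι]

section Semiring

variable [Semiring K]

/-- The matrix `U`, with rows indexed by `ι` and columns by `ι ⊕ Fin 1`; the summand `Fin 1` is the
last index. -/
def blockU (γ : ι → K) : Matrix ι (ι ⊕ Fin 1) K :=
  fromCols (diagonal γ) (replicateCol (Fin 1) 1)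

/-- The square matrix `N₁`, indexed by `ι ⊕ Fin 1`; the summand `Fin 1` is the last index. -/
def blockN₁ [Fintype ι] (ρ : K) (γ : ι → K) : Matrix (ι ⊕ Fin 1) (ι ⊕ Fin 1) K :=
  fromBlocks (diagonal fun i => ρ * γ i) (replicateCol (Fin 1) fun _ => ρ)
    (replicateRow (Fin 1) γ) (of fun _ _ => (Fintype.card ι : K))

variable (ι) in
/-- The left factor `R` of the factorization `N₁ = R U`: the scalar matrix `ρ` on top of a row of
ones. -/
def blockR (ρ : K) : Matrix (ι ⊕ Fin 1) ι K :=
  fromRows (diagonal fun _ => ρ) (replicateRow (Fin 1) 1)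

variable [Fintype ι]

theorem blockR_mul_blockU (ρ : K) (γ : ι → K) : blockR ι ρ * blockU γ = blockN₁ ρ γ := by
  rw [blockR, blockU, blockN₁, fromRows_mul_fromCols, diagonal_mul_diagonal]
  congr 1 <;> ext <;> simp [mul_apply, diagonal_apply]

theorem blockU_mul_blockR (ρ : K) (γ : ι → K) :
    blockU γ * blockR ι ρ = diagonal (fun i => γ i * ρ) + of fun _ _ => 1 := by
  rw [blockU, blockR, fromCols_mul_fromRows, diagonal_mul_diagonal]
  congr 1
  ext
  simp [mul_apply]

end Semiring

section Field

variable [Field K]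

/-- The matrix `V`, with rows indexed by `ι` and columns by `ι ⊕ Fin 1`; the summand `Fin 1` is the
last index. -/
def blockV (ρ : K) (γ : ι → K) : Matrix ι (ι ⊕ Fin 1) K :=
  fromCols (diagonal fun i => ρ / γ i) 0

/-- The square matrix `M`, indexed by `ι ⊕ Fin 1`; the summand `Fin 1` is the last index. -/
def blockM (ρ : K) (γ : ι → K) : Matrix (ι ⊕ Fin 1) (ι ⊕ Fin 1) K :=
  fromBlocks (of fun i j => if i = j then ρ else -1 / γ i)
    (replicateCol (Fin 1) fun i => 2 * ρ / γ i) (replicateRow (Fin 1) 1) (of fun _ _ => -ρ)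

variable [Fintype ι]

theorem blockM_mul_blockR (ρ : K) (γ : ι → K) :
    blockM ρ γ * blockR ι ρ =
      fromRows (diagonal (fun i => ρ ^ 2 + ρ / γ i) + of fun i _ => ρ / γ i) 0 := by
  rw [blockM, blockR, fromBlocks_mul_fromRows]
  congr 1
  · ext i j
    simp only [Matrix.add_apply, mul_apply, diagonal_apply, of_apply, replicateCol_apply,
      replicateRow_apply, Pi.one_apply, mul_one, mul_ite, mul_zero, Fin.sum_univ_one,
      Finset.sum_ite_eq', Finset.mem_univ, if_true]
    split_ifs <;> ring
  · ext
    simp [mul_apply, diagonal_apply]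

theorem transpose_blockV_mul_one_add_blockU_mul_blockR (ρ : K) {γ : ι → K} (hγ : ∀ i, γ i ≠ 0) :
    (blockV ρ γ)ᵀ * (1 + blockU γ * blockR ι ρ) =
      fromRows (diagonal (fun i => ρ ^ 2 + ρ / γ i) + of fun i _ => ρ / γ i) 0 := by
  rw [blockU_mul_blockR, blockV, transpose_fromCols, fromRows_mul, diagonal_transpose,
    transpose_zero, Matrix.zero_mul]
  congr 1
  ext i j
  have hi := hγ i
  simp only [diagonal_mul, Matrix.add_apply, one_apply, diagonal_apply, of_apply]
  split_ifs <;> field_simp <;> ring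

theorem VtU_identity_general (ρ : K) {γ : ι → K} (hγ : ∀ i, γ i ≠ 0) :
    (blockV ρ γ)ᵀ * blockU γ * (1 + blockN₁ ρ γ) = blockM ρ γ * blockN₁ ρ γ := by
  rw [← blockR_mul_blockU]
  calc (blockV ρ γ)ᵀ * blockU γ * (1 + blockR ι ρ * blockU γ)
      = (blockV ρ γ)ᵀ * (1 + blockU γ * blockR ι ρ) * blockU γ := by
        simp only [Matrix.mul_add, Matrix.add_mul, Matrix.mul_one, Matrix.mul_assoc]
    _ = blockM ρ γ * blockR ι ρ * blockU γ := by
        rw [transpose_blockV_mul_one_add_blockU_mul_blockR ρ hγ, blockM_mul_blockR]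
    _ = blockM ρ γ * (blockR ι ρ * blockU γ) := Matrix.mul_assoc ..

end Field

end Blocks

section Reindexing

variable (n : ℕ) (ρ : ℝ) (γ : Fin (n + 1) → ℝ)

theorem Umat_eq_submatrix : Umat n γ = (blockU γ).submatrix id finSumFinEquiv.symm := by
  ext i j
  cases j using Fin.lastCases <;> simp [Umat, blockU, diagonal_apply, Fin.ext_iff, Fin.is_le]

theorem Vmat_eq_submatrix : Vmat n ρ γ = (blockV ρ γ).submatrix id finSumFinEquiv.symm := by
  ext i j
  cases j using Fin.lastCases <;> simp [Vmat, blockV, diagonal_apply, Fin.ext_iff, i.isLt.ne]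

theorem N1mat_eq_submatrix :
    N1mat n ρ γ = (blockN₁ ρ γ).submatrix finSumFinEquiv.symm finSumFinEquiv.symm := by
  ext i j
  cases i using Fin.lastCases <;> cases j using Fin.lastCases <;>
    simp [N1mat, blockN₁, diagonal_apply, Fin.is_le]

theorem Mmat_eq_submatrix :
    Mmat n ρ γ = (blockM ρ γ).submatrix finSumFinEquiv.symm finSumFinEquiv.symm := by
  ext i j
  cases i using Fin.lastCases <;> cases j using Fin.lastCases <;>
    simp [Mmat, blockM, Fin.is_le]

theorem transpose_Vmat_mul_Umat_eq_submatrix :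
    (Vmat n ρ γ)ᵀ * Umat n γ = ((blockV ρ γ)ᵀ * blockU γ).submatrix
      finSumFinEquiv.symm finSumFinEquiv.symm := by
  rw [Vmat_eq_submatrix, Umat_eq_submatrix, transpose_submatrix,
    submatrix_mul _ _ _ _ _ Function.bijective_id]

theorem one_add_N1mat_eq_submatrix :
    1 + N1mat n ρ γ = (1 + blockN₁ ρ γ).submatrix finSumFinEquiv.symm finSumFinEquiv.symm := by
  rw [N1mat_eq_submatrix, ← submatrix_one_equiv (finSumFinEquiv (m := n + 1) (n := 1)).symm]
  rfl

end Reindexing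

/-- `Vᵀ U (I_{n+2} + N₁) = M N₁`. -/
theorem VtU_identity (n : ℕ) (ρ : ℝ) (hρ : 0 < ρ)
    (γ : Fin (n + 1) → ℝ) (hγ : ∀ i, 0 < γ i) :
    (Vmat n ρ γ)ᵀ * Umat n γ * (1 + N1mat n ρ γ) = Mmat n ρ γ * N1mat n ρ γ := by
  rw [transpose_Vmat_mul_Umat_eq_submatrix, one_add_N1mat_eq_submatrix, Mmat_eq_submatrix,
    N1mat_eq_submatrix, submatrix_mul_equiv, submatrix_mul_equiv,
    VtU_identity_general ρ fun i => (hγ i).ne']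
end

section
/- Let T > 0, ρ > 0, γ₀, …, γₙ > 0 and x ∈ ℝ^{n+1}. Call ψ = (α₀, …, αₙ, S) : [0,T] → ℝ^{n+2} regular if each α_i is continuous with ∫₀^T α_i(t) dt = x_i and S(t) = ∫₀^t e^{−ρ(t−s)} Σ_{j=0}^n α_j(s) ds for all t. Then a regular ψ satisfies the equilibrium conditions — i.e., there exists η ∈ ℝ^{n+1} with γ_i α_i(t) + S(t) + ∫_t^T e^{ρ(t−s)} α_i(s) ds = η_i for all t ∈ [0,T] and all i — if and only if ψ is continuously differentiable and solves the linear system dψ/dt (t) = M ψ(t) − Vᵀ (U ψ(T)) for all t ∈ [0,T], where M, U, V are the matrices defined in the context. -/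
open Matrix

open MeasureTheory

/-!
Let `Fᵢ(t) = γᵢ αᵢ(t) + S(t) + ∫ₜᵀ e^{ρ(t-s)} αᵢ(s) ds` be the left-hand side of the `i`-th
equilibrium condition. The backward integral `I` solves `I' = ρ I - αᵢ`, so in the terminal value
problem `F' = ρ (F - Fᵢ(T))`, `F(T) = Fᵢ(T)`, written out for `F = Fᵢ`, all integrals cancel and
what is left is precisely the `αᵢ`-row of the linear system. By uniqueness, the only solution of
this problem is the constant `Fᵢ(T)`, so solving it is the same as satisfying the equilibrium
condition. The `S`-row of the system holds for every regular `ψ`.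
-/

open Set

section Calculus

variable {E : Type*} [NormedAddCommGroup E] [NormedSpace ℝ E] {a b c t : ℝ} {f : ℝ → E}

theorem hasDerivWithinAt_integral_Icc [CompleteSpace E] (hf : ContinuousOn f (Icc a b))
    (hc : c ∈ Icc a b) (ht : t ∈ Icc a b) :
    HasDerivWithinAt (fun u => ∫ s in c..u, f s) (f t) (Icc a b) t :=
  have : Fact (t ∈ Icc a b) := ⟨ht⟩
  intervalIntegral.integral_hasDerivWithinAt_right
    (hf.mono (uIcc_subset_Icc hc ht)).intervalIntegrable
    (hf.stronglyMeasurableAtFilter_nhdsWithin measurableSet_Icc t) (hf t ht)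

theorem hasDerivWithinAt_integral_exp_smul [CompleteSpace E] (κ : ℝ)
    (hf : ContinuousOn f (Icc a b)) (hc : c ∈ Icc a b) (ht : t ∈ Icc a b) :
    HasDerivWithinAt (fun u => ∫ s in c..u, Real.exp (κ * (u - s)) • f s)
      (f t + κ • ∫ s in c..t, Real.exp (κ * (t - s)) • f s) (Icc a b) t := by
  have exp_factor (u s : ℝ) :
      Real.exp (κ * (u - s)) = Real.exp (κ * u) * Real.exp (-(κ * s)) := by
    rw [← Real.exp_add, mul_sub, sub_eq_add_neg]
  simp only [exp_factor, mul_smul, intervalIntegral.integral_smul]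
  have h_exp : HasDerivWithinAt (fun u => Real.exp (κ * u)) (Real.exp (κ * t) * κ) (Icc a b) t := by
    simpa using ((hasDerivAt_id t).const_mul κ).exp.hasDerivWithinAt
  have h_int : HasDerivWithinAt (fun u => ∫ s in c..u, Real.exp (-(κ * s)) • f s)
      (Real.exp (-(κ * t)) • f t) (Icc a b) t :=
    hasDerivWithinAt_integral_Icc (ContinuousOn.smul (by fun_prop) hf) hc ht
  refine (h_exp.smul h_int).congr_deriv ?_
  rw [smul_smul, ← Real.exp_add, add_neg_cancel, Real.exp_zero, one_smul, smul_smul, mul_comm _ κ]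

theorem hasDerivWithinAt_integral_exp_smul_left [CompleteSpace E] (κ : ℝ)
    (hf : ContinuousOn f (Icc a b)) (hc : c ∈ Icc a b) (ht : t ∈ Icc a b) :
    HasDerivWithinAt (fun u => ∫ s in u..c, Real.exp (κ * (u - s)) • f s)
      (κ • (∫ s in t..c, Real.exp (κ * (t - s)) • f s) - f t) (Icc a b) t := by
  simp only [intervalIntegral.integral_symm c]
  refine (hasDerivWithinAt_integral_exp_smul κ hf hc ht).neg.congr_deriv ?_
  rw [smul_neg, neg_add_rev, sub_eq_add_neg]

theorem hasDerivWithinAt_of_eq_integral_exp_smul [CompleteSpace E] {S : ℝ → E} {κ : ℝ}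
    (hf : ContinuousOn f (Icc a b)) (hc : c ∈ Icc a b)
    (hS : ∀ t ∈ Icc a b, S t = ∫ s in c..t, Real.exp (κ * (t - s)) • f s) (ht : t ∈ Icc a b) :
    HasDerivWithinAt S (f t + κ • S t) (Icc a b) t := by
  rw [hS t ht]
  exact (hasDerivWithinAt_integral_exp_smul κ hf hc ht).congr hS (hS t ht)

theorem eq_terminal_iff_hasDerivWithinAt_smul_sub (κ : ℝ) :
    (∀ t ∈ Icc a b, f t = f b) ↔
      ∀ t ∈ Icc a b, HasDerivWithinAt f (κ • (f t - f b)) (Icc a b) t := by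
  constructor
  · intro h t ht
    rw [h t ht, sub_self, smul_zero]
    exact (hasDerivWithinAt_const t _ (f b)).congr h (h t ht)
  · intro h
    have lipschitz : LipschitzWith ‖κ‖₊ fun y : E => κ • (y - f b) := by
      refine LipschitzWith.of_dist_le_mul fun y z => ?_
      rw [dist_smul₀, dist_sub_right, coe_nnnorm]
    exact ODE_solution_unique_of_mem_Icc_left (v := fun _ y => κ • (y - f b)) (s := fun _ => univ)
      (fun _ _ => lipschitz.lipschitzOnWith) (fun t ht => (h t ht).continuousWithinAt)
      (fun t ht => (h t (Ioc_subset_Icc_self ht)).mono_of_mem_nhdsWithin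
        (Icc_mem_nhdsLE_of_mem ht))
      (fun _ _ => mem_univ _) continuousOn_const
      (fun t _ => by simpa using hasDerivWithinAt_const t (Iic t) (f b))
      (fun _ _ => mem_univ _) rfl

end Calculus

section NontriviallyNormedField

variable {𝕜 : Type*} [NontriviallyNormedField 𝕜] {s : Set 𝕜}

theorem hasDerivWithinAt_const_mul_add_iff {c d h' t : 𝕜} {f h : 𝕜 → 𝕜} (hc : c ≠ 0)
    (hh : HasDerivWithinAt h h' s t) :
    HasDerivWithinAt (fun u => c * f u + h u) d s t ↔ HasDerivWithinAt f ((d - h') / c) s t := by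
  constructor <;> intro H
  · simpa [hc] using (H.sub hh).div_const c
  · exact ((H.const_mul c).add hh).congr_deriv (by rw [mul_div_cancel₀ _ hc, sub_add_cancel])

theorem contDiffOn_one_of_hasDerivWithinAt {F : Type*} [NormedAddCommGroup F] [NormedSpace 𝕜 F]
    {f f' : 𝕜 → F} (hs : UniqueDiffOn 𝕜 s) (hf : ∀ t ∈ s, HasDerivWithinAt f (f' t) s t)
    (hf' : ContinuousOn f' s) : ContDiffOn 𝕜 1 f s :=
  (contDiffOn_one_iff_derivWithin hs).2 ⟨fun t ht => (hf t ht).differentiableWithinAt,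
    hf'.congr fun t ht => (hf t ht).derivWithin (hs t ht)⟩

theorem contDiffOn_one_of_hasDerivWithinAt_mulVec_sub {ι : Type*} [Fintype ι]
    {A : Matrix ι ι 𝕜} {c : ι → 𝕜} {y : 𝕜 → ι → 𝕜} (hs : UniqueDiffOn 𝕜 s)
    (hy : ∀ t ∈ s, HasDerivWithinAt y (A *ᵥ y t - c) s t) : ContDiffOn 𝕜 1 y s :=
  have y_cont : ContinuousOn y s := fun t ht => (hy t ht).continuousWithinAt
  have mulVec_cont : Continuous fun z : ι → 𝕜 => A *ᵥ z :=
    continuous_const.matrix_mulVec continuous_id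
  contDiffOn_one_of_hasDerivWithinAt hs hy
    ((mulVec_cont.comp_continuousOn y_cont).sub continuousOn_const)

end NontriviallyNormedField

section Matrices

variable (n : ℕ) (ρ : ℝ) (γ : Fin (n + 1) → ℝ)

theorem Umat_mulVec (p : Fin (n + 2) → ℝ) :
    Umat n γ *ᵥ p = fun i => γ i * p i.castSucc + p (Fin.last (n + 1)) := by
  ext i
  simp [mulVec, dotProduct, Fin.sum_univ_castSucc, Umat, Fin.val_inj, Fin.is_le]

theorem Vmat_transpose_mulVec_castSucc (q : Fin (n + 1) → ℝ) (i : Fin (n + 1)) :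
    ((Vmat n ρ γ)ᵀ *ᵥ q) i.castSucc = ρ / γ i * q i := by
  simp [mulVec, dotProduct, Vmat, Fin.val_inj]

theorem Vmat_transpose_mulVec_last (q : Fin (n + 1) → ℝ) :
    ((Vmat n ρ γ)ᵀ *ᵥ q) (Fin.last (n + 1)) = 0 := by
  simp [mulVec, dotProduct, Vmat, fun i : Fin (n + 1) => i.is_lt.ne]

theorem Mmat_mulVec_castSucc (p : Fin (n + 2) → ℝ) (i : Fin (n + 1)) :
    (Mmat n ρ γ *ᵥ p) i.castSucc = ρ * p i.castSucc +
      (p i.castSucc + 2 * ρ * p (Fin.last (n + 1)) - ∑ j : Fin (n + 1), p j.castSucc) / γ i := by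
  have M_entry (j : Fin (n + 1)) : Mmat n ρ γ i.castSucc j.castSucc =
      -1 / γ i + if i = j then ρ + 1 / γ i else 0 := by
    by_cases h : i = j
    · simp [Mmat, Fin.is_le, h]; ring
    · simp [Mmat, Fin.is_le, h]
  have M_last : Mmat n ρ γ i.castSucc (Fin.last (n + 1)) = 2 * ρ / γ i := by
    simp [Mmat, Fin.is_le]
  simp only [mulVec, dotProduct, Fin.sum_univ_castSucc, M_entry, M_last, add_mul, ite_mul, zero_mul,
    Finset.sum_add_distrib, Finset.sum_ite_eq, Finset.mem_univ, if_true, ← Finset.mul_sum]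
  ring

theorem Mmat_mulVec_last (p : Fin (n + 2) → ℝ) :
    (Mmat n ρ γ *ᵥ p) (Fin.last (n + 1)) =
      ∑ j : Fin (n + 1), p j.castSucc - ρ * p (Fin.last (n + 1)) := by
  simp [mulVec, dotProduct, Fin.sum_univ_castSucc, Mmat, Fin.is_le, sub_eq_add_neg]

theorem Mmat_mulVec_sub_Vmat_transpose_mulVec_castSucc (p q : Fin (n + 2) → ℝ) (i : Fin (n + 1)) :
    (Mmat n ρ γ *ᵥ p - (Vmat n ρ γ)ᵀ *ᵥ (Umat n γ *ᵥ q)) i.castSucc =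
      ρ * p i.castSucc + (p i.castSucc + ρ * p (Fin.last (n + 1)) -
        (∑ j : Fin (n + 1), p j.castSucc - ρ * p (Fin.last (n + 1))) -
          ρ * (γ i * q i.castSucc + q (Fin.last (n + 1)))) / γ i := by
  rw [Pi.sub_apply, Mmat_mulVec_castSucc, Vmat_transpose_mulVec_castSucc, Umat_mulVec]
  ring

theorem Mmat_mulVec_sub_Vmat_transpose_mulVec_last (p q : Fin (n + 2) → ℝ) :
    (Mmat n ρ γ *ᵥ p - (Vmat n ρ γ)ᵀ *ᵥ (Umat n γ *ᵥ q)) (Fin.last (n + 1)) =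
      ∑ j : Fin (n + 1), p j.castSucc - ρ * p (Fin.last (n + 1)) := by
  rw [Pi.sub_apply, Mmat_mulVec_last, Vmat_transpose_mulVec_last, sub_zero]

end Matrices

section MarginalCost

variable {ρ γ a b t : ℝ} {α S S' : ℝ → ℝ}

/-- The marginal cost at time `t` of trading at rate `α` up to time `b` with quadratic cost
coefficient `γ`, price impact `S` and exponential decay kernel of rate `ρ`. It is the left-hand
side of the Fredholm optimality condition of a single agent, who is in equilibrium when it does
not depend on `t`. -/
noncomputable def marginalCost (ρ γ : ℝ) (α S : ℝ → ℝ) (b t : ℝ) : ℝ :=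
  γ * α t + S t + ∫ s in t..b, Real.exp (ρ * (t - s)) * α s

theorem marginalCost_terminal : marginalCost ρ γ α S b b = γ * α b + S b := by
  simp [marginalCost]

theorem hasDerivWithinAt_marginalCost_iff {d : ℝ} (hγ : γ ≠ 0) (hα : ContinuousOn α (Icc a b))
    (hS : HasDerivWithinAt S d (Icc a b) t) (ht : t ∈ Icc a b) (c : ℝ) :
    HasDerivWithinAt (marginalCost ρ γ α S b) (ρ * (marginalCost ρ γ α S b t - c)) (Icc a b) t ↔
      HasDerivWithinAt α (ρ * α t + (α t + ρ * S t - d - ρ * c) / γ) (Icc a b) t := by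
  have hb : b ∈ Icc a b := right_mem_Icc.2 (ht.1.trans ht.2)
  have h_rest := hS.add (hasDerivWithinAt_integral_exp_smul_left ρ hα hb ht)
  have cost_split : marginalCost ρ γ α S b =
      fun u => γ * α u + (S u + ∫ s in u..b, Real.exp (ρ * (u - s)) • α s) :=
    funext fun u => add_assoc _ _ _
  rw [cost_split]
  refine (hasDerivWithinAt_const_mul_add_iff hγ h_rest).trans ?_
  congr! 1
  rw [smul_eq_mul]
  field_simp
  ring

theorem marginalCost_eq_terminal_iff (hγ : γ ≠ 0) (hα : ContinuousOn α (Icc a b))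
    (hS : ∀ t ∈ Icc a b, HasDerivWithinAt S (S' t) (Icc a b) t) :
    (∀ t ∈ Icc a b, marginalCost ρ γ α S b t = marginalCost ρ γ α S b b) ↔
      ∀ t ∈ Icc a b, HasDerivWithinAt α
        (ρ * α t + (α t + ρ * S t - S' t - ρ * (γ * α b + S b)) / γ) (Icc a b) t := by
  rw [eq_terminal_iff_hasDerivWithinAt_smul_sub ρ, ← marginalCost_terminal (ρ := ρ)]
  exact forall₂_congr fun t ht => hasDerivWithinAt_marginalCost_iff hγ hα (hS t ht) ht _

end MarginalCost

theorem exists_forall_eq_iff_forall_eq {X ι β : Type*} {s : Set X} {b : X} (hb : b ∈ s)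
    {F : ι → X → β} : (∃ η : ι → β, ∀ t ∈ s, ∀ i, F i t = η i) ↔ ∀ i, ∀ t ∈ s, F i t = F i b :=
  ⟨fun ⟨_, h⟩ i t ht => (h t ht i).trans (h b hb i).symm,
    fun h => ⟨(F · b), fun t ht i => h i t ht⟩⟩

theorem regular_equilibrium_iff_linear_ode_general
    (n : ℕ) (T : ℝ) (hT : 0 < T) (ρ : ℝ) (γ : Fin (n + 1) → ℝ) (hγ : ∀ i, γ i ≠ 0)
    (ψ : ℝ → Fin (n + 2) → ℝ)
    (hreg_cont : ∀ i : Fin (n + 1), ContinuousOn (fun t => ψ t i.castSucc) (Icc 0 T))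
    (hreg_price : ∀ t ∈ Icc (0 : ℝ) T, ψ t (Fin.last (n + 1)) =
      ∫ s in (0 : ℝ)..t, Real.exp (-ρ * (t - s)) * ∑ j : Fin (n + 1), ψ s j.castSucc) :
    (∃ η : Fin (n + 1) → ℝ, ∀ t ∈ Icc (0 : ℝ) T, ∀ i : Fin (n + 1),
        γ i * ψ t i.castSucc + ψ t (Fin.last (n + 1)) +
          (∫ s in t..T, Real.exp (ρ * (t - s)) * ψ s i.castSucc) = η i) ↔
      (∀ k, ContDiffOn ℝ 1 (fun t => ψ t k) (Icc 0 T)) ∧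
        ∀ t ∈ Icc (0 : ℝ) T, ∀ k, HasDerivWithinAt (fun t => ψ t k)
          ((Mmat n ρ γ *ᵥ ψ t - (Vmat n ρ γ)ᵀ *ᵥ (Umat n γ *ᵥ ψ T)) k) (Icc 0 T) t := by
  have h_price : ∀ t ∈ Icc (0 : ℝ) T, HasDerivWithinAt (fun t => ψ t (Fin.last (n + 1)))
      (∑ j : Fin (n + 1), ψ t j.castSucc - ρ * ψ t (Fin.last (n + 1))) (Icc 0 T) t := fun t ht => by
    simpa [← sub_eq_add_neg] using hasDerivWithinAt_of_eq_integral_exp_smul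
      (continuousOn_finsetSum _ fun i _ => hreg_cont i) (left_mem_Icc.2 hT.le) hreg_price ht
  have h_agent (i : Fin (n + 1)) :
      (∀ t ∈ Icc 0 T, marginalCost ρ (γ i) (ψ · i.castSucc) (ψ · (Fin.last (n + 1))) T t =
        marginalCost ρ (γ i) (ψ · i.castSucc) (ψ · (Fin.last (n + 1))) T T) ↔
      ∀ t ∈ Icc 0 T, HasDerivWithinAt (ψ · i.castSucc)
        ((Mmat n ρ γ *ᵥ ψ t - (Vmat n ρ γ)ᵀ *ᵥ (Umat n γ *ᵥ ψ T)) i.castSucc) (Icc 0 T) t := by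
    simpa only [Mmat_mulVec_sub_Vmat_transpose_mulVec_castSucc] using
      marginalCost_eq_terminal_iff (hγ i) (hreg_cont i) h_price
  rw [and_iff_right_of_imp fun h => contDiffOn_pi.1 <| contDiffOn_one_of_hasDerivWithinAt_mulVec_sub
    (uniqueDiffOn_Icc hT) fun t ht => hasDerivWithinAt_pi.2 (h t ht)]
  refine (exists_forall_eq_iff_forall_eq (right_mem_Icc.2 hT.le)).trans <|
    (forall_congr' h_agent).trans ⟨fun h t ht => ?_, fun h i t ht => h t ht i.castSucc⟩
  refine Fin.forall_fin_succ'.2 ⟨fun i => h i t ht, ?_⟩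
  simpa only [Mmat_mulVec_sub_Vmat_transpose_mulVec_last] using h_price t ht

/-- For a regular `ψ = (α₀, …, αₙ, S)` (each `α_i` continuous
on `[0,T]` with `∫₀ᵀ α_i = x_i`, and `S(t) = ∫₀ᵗ e^{−ρ(t−s)} Σⱼ αⱼ(s) ds`), the
equilibrium conditions — existence of `η` with
`γ_i α_i(t) + S(t) + ∫ₜᵀ e^{ρ(t−s)} α_i(s) ds = η_i` on `[0,T]` — hold if and
only if `ψ` is continuously differentiable on `[0,T]` and solves
`dψ/dt = Mψ − Vᵀ(Uψ(T))` there. -/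
theorem regular_equilibrium_iff_linear_ode
    (n : ℕ) (T : ℝ) (hT : 0 < T) (ρ : ℝ) (hρ : 0 < ρ)
    (γ : Fin (n + 1) → ℝ) (hγ : ∀ i, 0 < γ i)
    (x : Fin (n + 1) → ℝ)
    (ψ : ℝ → Fin (n + 2) → ℝ)
    (hreg_cont : ∀ i : Fin (n + 1),
      ContinuousOn (fun t => ψ t i.castSucc) (Set.Icc 0 T))
    (hreg_constraint : ∀ i : Fin (n + 1), (∫ t in (0:ℝ)..T, ψ t i.castSucc) = x i)
    (hreg_price : ∀ t ∈ Set.Icc (0 : ℝ) T,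
      ψ t (Fin.last (n + 1))
        = ∫ s in (0:ℝ)..t,
            Real.exp (-ρ * (t - s)) * ∑ j : Fin (n + 1), ψ s j.castSucc) :
    (∃ η : Fin (n + 1) → ℝ, ∀ t ∈ Set.Icc (0 : ℝ) T, ∀ i : Fin (n + 1),
        γ i * ψ t i.castSucc + ψ t (Fin.last (n + 1))
            + (∫ s in t..T, Real.exp (ρ * (t - s)) * ψ s i.castSucc) = η i)
      ↔ ((∀ k : Fin (n + 2), ContDiffOn ℝ 1 (fun t => ψ t k) (Set.Icc 0 T)) ∧
          ∀ t ∈ Set.Icc (0 : ℝ) T, ∀ k : Fin (n + 2),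
            HasDerivWithinAt (fun t => ψ t k)
              ((Matrix.mulVec (Mmat n ρ γ) (ψ t)
                  - Matrix.mulVec (Vmat n ρ γ)ᵀ
                      (Matrix.mulVec (Umat n γ) (ψ T))) k)
              (Set.Icc 0 T) t) :=
  regular_equilibrium_iff_linear_ode_general n T hT ρ γ (fun i => (hγ i).ne') ψ hreg_cont hreg_price
end
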